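/- arXiv:1812.08276 — 3 statements merged into one kernel-verified Lean document; each statement's English description precedes it below -/
import Mathlib

section
/- Let T be a tree (a connected graph with a unique path between any two distinct vertices) such that deg(v) ≤ k for every vertex v, where k ≥ 2 is an integer. Let 1 < p < ∞ and q = p/(p−1). Then the operator norm of the shift operator S on ℓ^p(T) satisfies ‖S‖ ≤ (k−1)^{1/p} + (k−1)^{1/q}. -/
/-- The shift (adjacency) operator: `(Sf)(u) = ∑_{v ~ u} f(v)`. -/
noncomputable def shiftOp {V : Type*} (G : SimpleGraph V) (f : V → ℂ) (u : V) : ℂ :=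
  ∑ᶠ v ∈ G.neighborSet u, f v

/-- The degree of a vertex. -/
noncomputable def gdeg {V : Type*} (G : SimpleGraph V) (v : V) : ℕ :=
  (G.neighborSet v).ncard

/-- Membership in ℓ^p: `∑_{v} |f(v)|^p < ∞`. -/
def memlp {V : Type*} (f : V → ℂ) (p : ℝ) : Prop :=
  Summable fun v => ‖f v‖ ^ p

/-- The ℓ^p norm: `(∑_{v} |f(v)|^p)^{1/p}`. -/
noncomputable def lpnorm {V : Type*} (f : V → ℂ) (p : ℝ) : ℝ :=
  (∑' v, ‖f v‖ ^ p) ^ (1 / p)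

/-!
Let `d` be the distance to a root, one being chosen in each component. A vertex has at most one
neighbour of smaller depth, so for `0 < x ≤ 1` the weight `w = x ^ d` satisfies
`S w ≤ (x⁻¹ + (k - 1) x) w`; a root, where all `k` neighbours are deeper, is covered because
`x ≤ x⁻¹`. For `x = (k - 1)^(-1/p)` the factor is `(k - 1)^(1/p) + (k - 1)^(1/q)`. Since
`w ^ (p - 1)` is the same weight for `x = (k - 1)^(-1/q)`, it has the same factor, and the Schur
test with weight `w` bounds `S` on `ℓ^p` by this number.
-/

open Finset

section Schur

variable {ι κ : Type*} {p : ℝ}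

lemma rpow_sum_mul_le (s : Finset ι) (hp : 1 ≤ p) {w f : ι → ℝ}
    (hw : ∀ i, 0 ≤ w i) (hf : ∀ i, 0 ≤ f i) :
    (∑ i ∈ s, w i * f i) ^ p ≤ (∑ i ∈ s, w i) ^ (p - 1) * ∑ i ∈ s, w i * f i ^ p := by
  have hp0 : 0 < p := by linarith
  have hw_sum : 0 ≤ ∑ i ∈ s, w i := sum_nonneg fun i _ => hw i
  have hwf_sum : 0 ≤ ∑ i ∈ s, w i * f i ^ p :=
    sum_nonneg fun i _ => mul_nonneg (hw i) (Real.rpow_nonneg (hf i) p)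
  calc (∑ i ∈ s, w i * f i) ^ p
      ≤ ((∑ i ∈ s, w i) ^ (1 - p⁻¹) * (∑ i ∈ s, w i * f i ^ p) ^ p⁻¹) ^ p :=
        Real.rpow_le_rpow (sum_nonneg fun i _ => mul_nonneg (hw i) (hf i))
          (Real.inner_le_weight_mul_Lp_of_nonneg s hp w f hw hf) hp0.le
    _ = (∑ i ∈ s, w i) ^ (p - 1) * ∑ i ∈ s, w i * f i ^ p := by
        rw [Real.mul_rpow (by positivity) (by positivity), ← Real.rpow_mul hw_sum,
          Real.rpow_inv_rpow hwf_sum hp0.ne', sub_mul, one_mul, inv_mul_cancel₀ hp0.ne']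

variable {K : ι → κ → ℝ} {x : ι → ℝ} {y f : κ → ℝ} {a b : ℝ}

lemma rpow_sum_kernel_mul_le {c : ℝ} {k : κ → ℝ} (t : Finset κ) (hp : 1 ≤ p) (hk : ∀ j, 0 ≤ k j)
    (hy : ∀ j, 0 < y j) (hf : ∀ j, 0 ≤ f j) (hc : ∑ j ∈ t, k j * y j ≤ c) :
    (∑ j ∈ t, k j * f j) ^ p ≤ c ^ (p - 1) * ∑ j ∈ t, k j * (f j ^ p / y j ^ (p - 1)) := by
  have hky : ∀ j, 0 ≤ k j * y j := fun j => mul_nonneg (hk j) (hy j).le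
  have hfy : ∀ j, 0 ≤ f j / y j := fun j => div_nonneg (hf j) (hy j).le
  have hterm : ∀ j, k j * y j * (f j / y j) ^ p = k j * (f j ^ p / y j ^ (p - 1)) := fun j => by
    rw [Real.div_rpow (hf j) (hy j).le, Real.rpow_sub_one (hy j).ne']
    field_simp [(hy j).ne']
  calc (∑ j ∈ t, k j * f j) ^ p
      = (∑ j ∈ t, k j * y j * (f j / y j)) ^ p := by
        congr 1
        exact sum_congr rfl fun j _ => by field_simp [(hy j).ne']
    _ ≤ (∑ j ∈ t, k j * y j) ^ (p - 1) * ∑ j ∈ t, k j * y j * (f j / y j) ^ p :=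
        rpow_sum_mul_le t hp hky hfy
    _ ≤ c ^ (p - 1) * ∑ j ∈ t, k j * y j * (f j / y j) ^ p :=
        mul_le_mul_of_nonneg_right
          (Real.rpow_le_rpow (sum_nonneg fun j _ => hky j) hc (by linarith))
          (sum_nonneg fun j _ => mul_nonneg (hky j) (Real.rpow_nonneg (hfy j) p))
    _ = c ^ (p - 1) * ∑ j ∈ t, k j * (f j ^ p / y j ^ (p - 1)) := by simp only [hterm]

theorem sum_rpow_sum_kernel_mul_le_of_schur (s : Finset ι) (t : Finset κ) (hp : 1 ≤ p)
    (hK : ∀ i j, 0 ≤ K i j) (ha : 0 ≤ a) (hx : ∀ i, 0 ≤ x i) (hy : ∀ j, 0 < y j)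
    (hf : ∀ j, 0 ≤ f j) (hrow : ∀ i ∈ s, ∑ j ∈ t, K i j * y j ≤ a * x i)
    (hcol : ∀ j ∈ t, ∑ i ∈ s, K i j * x i ^ (p - 1) ≤ b * y j ^ (p - 1)) :
    ∑ i ∈ s, (∑ j ∈ t, K i j * f j) ^ p ≤ a ^ (p - 1) * b * ∑ j ∈ t, f j ^ p := by
  set g : κ → ℝ := fun j => f j ^ p / y j ^ (p - 1)
  have hg0 : ∀ j, 0 ≤ g j := fun j =>
    div_nonneg (Real.rpow_nonneg (hf j) p) (Real.rpow_nonneg (hy j).le _)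
  calc ∑ i ∈ s, (∑ j ∈ t, K i j * f j) ^ p
      ≤ ∑ i ∈ s, (a * x i) ^ (p - 1) * ∑ j ∈ t, K i j * g j :=
        sum_le_sum fun i hi => rpow_sum_kernel_mul_le t hp (hK i) hy hf (hrow i hi)
    _ = a ^ (p - 1) * ∑ j ∈ t, (∑ i ∈ s, K i j * x i ^ (p - 1)) * g j := by
        simp only [mul_sum, sum_mul]
        rw [sum_comm]
        refine sum_congr rfl fun j _ => sum_congr rfl fun i _ => ?_
        rw [Real.mul_rpow ha (hx i)]
        ring
    _ ≤ a ^ (p - 1) * ∑ j ∈ t, b * y j ^ (p - 1) * g j := by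
        gcongr with j hj
        · exact hg0 j
        · exact hcol j hj
    _ = a ^ (p - 1) * b * ∑ j ∈ t, f j ^ p := by
        have hcancel (j) : y j ^ (p - 1) * g j = f j ^ p :=
          mul_div_cancel₀ _ (Real.rpow_pos_of_pos (hy j) _).ne'
        simp only [mul_assoc, hcancel, mul_sum]

end Schur

lemma memlp_and_lpnorm_le_of_sum_le {V : Type*} {f g : V → ℂ} {p C : ℝ} (hp : 0 < p) (hC : 0 ≤ C)
    (h : ∀ s : Finset V, ∑ v ∈ s, ‖g v‖ ^ p ≤ C ^ p * ∑' v, ‖f v‖ ^ p) :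
    memlp g p ∧ lpnorm g p ≤ C * lpnorm f p := by
  have hf0 : 0 ≤ ∑' v, ‖f v‖ ^ p := tsum_nonneg fun v => by positivity
  refine ⟨summable_of_sum_le (fun v => by positivity) h, ?_⟩
  calc lpnorm g p
      ≤ (C ^ p * ∑' v, ‖f v‖ ^ p) ^ (1 / p) :=
        Real.rpow_le_rpow (tsum_nonneg fun v => by positivity)
          (Real.tsum_le_of_sum_le (fun v => by positivity) h) (by positivity)
    _ = C * lpnorm f p := by
        rw [Real.mul_rpow (by positivity) hf0, lpnorm, one_div, Real.rpow_rpow_inv hC hp.ne']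

section Graph

variable {V : Type*} {G : SimpleGraph V}

lemma shiftOp_eq_sum_neighborFinset [G.LocallyFinite] (f : V → ℂ) (u : V) :
    shiftOp G f u = ∑ v ∈ G.neighborFinset u, f v :=
  finsum_mem_eq_toFinset_sum f (G.neighborSet u)

lemma gdeg_eq_degree [G.LocallyFinite] (u : V) : gdeg G u = G.degree u :=
  Set.ncard_eq_toFinset_card' _

lemma sum_rpow_sum_neighborFinset_le_of_schur [DecidableEq V] [G.LocallyFinite] {p a : ℝ}
    {w f : V → ℝ} (hp : 1 ≤ p) (ha : 0 ≤ a) (hw : ∀ v, 0 < w v) (hf : ∀ v, 0 ≤ f v)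
    (hrow : ∀ u, ∑ v ∈ G.neighborFinset u, w v ≤ a * w u)
    (hcol : ∀ u, ∑ v ∈ G.neighborFinset u, w v ^ (p - 1) ≤ a * w u ^ (p - 1)) (s : Finset V) :
    ∑ u ∈ s, (∑ v ∈ G.neighborFinset u, f v) ^ p ≤
      a ^ p * ∑ v ∈ s.biUnion (G.neighborFinset ·), f v ^ p := by
  classical
  set t := s.biUnion (G.neighborFinset ·)
  set K : V → V → ℝ := fun u v => if G.Adj u v then 1 else 0 with hK
  have hK_row (u) (hu : u ∈ s) (g : V → ℝ) :
      ∑ v ∈ t, K u v * g v = ∑ v ∈ G.neighborFinset u, g v := by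
    have hsub : G.neighborFinset u ⊆ t := subset_biUnion_of_mem (G.neighborFinset ·) hu
    simp only [hK, ite_mul, one_mul, zero_mul, ← sum_filter, ← SimpleGraph.mem_neighborFinset,
      filter_mem_eq_inter, inter_eq_right.2 hsub]
  have hK_col (v) (g : V → ℝ) (hg : ∀ u, 0 ≤ g u) :
      ∑ u ∈ s, K u v * g u ≤ ∑ u ∈ G.neighborFinset v, g u := by
    simp only [hK, ite_mul, one_mul, zero_mul, ← sum_filter]
    refine sum_le_sum_of_subset_of_nonneg (fun u hu => ?_) fun u _ _ => hg u
    exact (G.mem_neighborFinset v u).2 (mem_filter.1 hu).2.symm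
  calc ∑ u ∈ s, (∑ v ∈ G.neighborFinset u, f v) ^ p
      = ∑ u ∈ s, (∑ v ∈ t, K u v * f v) ^ p :=
        sum_congr rfl fun u hu => by rw [hK_row u hu]
    _ ≤ a ^ (p - 1) * a * ∑ v ∈ t, f v ^ p :=
        sum_rpow_sum_kernel_mul_le_of_schur s t hp (fun u v => by positivity) ha
          (fun u => (hw u).le) hw hf (fun u hu => (hK_row u hu w).trans_le (hrow u))
          fun v _ => (hK_col v _ fun u => Real.rpow_nonneg (hw u).le _).trans (hcol v)
    _ = a ^ p * ∑ v ∈ t, f v ^ p := by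
        rw [← Real.rpow_add_one' ha (by linarith), sub_add_cancel]

theorem shiftOp_bound_of_schur [G.LocallyFinite] {p a : ℝ} {w : V → ℝ} (hp : 1 ≤ p)
    (ha : 0 ≤ a) (hw : ∀ v, 0 < w v)
    (hrow : ∀ u, ∑ v ∈ G.neighborFinset u, w v ≤ a * w u)
    (hcol : ∀ u, ∑ v ∈ G.neighborFinset u, w v ^ (p - 1) ≤ a * w u ^ (p - 1))
    {f : V → ℂ} (hf : memlp f p) :
    memlp (shiftOp G f) p ∧ lpnorm (shiftOp G f) p ≤ a * lpnorm f p := by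
  classical
  have hp0 : 0 < p := by linarith
  refine memlp_and_lpnorm_le_of_sum_le hp0 ha fun s => ?_
  calc ∑ u ∈ s, ‖shiftOp G f u‖ ^ p
      ≤ ∑ u ∈ s, (∑ v ∈ G.neighborFinset u, ‖f v‖) ^ p := by
        refine sum_le_sum fun u _ => Real.rpow_le_rpow (norm_nonneg _) ?_ hp0.le
        rw [shiftOp_eq_sum_neighborFinset]
        exact norm_sum_le _ _
    _ ≤ a ^ p * ∑ v ∈ s.biUnion (G.neighborFinset ·), ‖f v‖ ^ p :=
        sum_rpow_sum_neighborFinset_le_of_schur hp ha hw (fun v => norm_nonneg _) hrow hcol s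
    _ ≤ a ^ p * ∑' v, ‖f v‖ ^ p :=
        mul_le_mul_of_nonneg_left (hf.sum_le_tsum _ fun v _ => by positivity) (by positivity)

variable (G) in
/-- The depth of a vertex in a forest: its distance to the root of its component, the roots being
chosen by `Quot.out`. -/
noncomputable def forestDepth (v : V) : ℕ :=
  G.dist (G.connectedComponentMk v).out v

lemma reachable_out_connectedComponentMk (v : V) :
    G.Reachable (G.connectedComponentMk v).out v :=
  SimpleGraph.ConnectedComponent.exact (Quot.out_eq _)

lemma forestDepth_eq_dist_of_adj {u v : V} (h : G.Adj u v) :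
    forestDepth G v = G.dist (G.connectedComponentMk u).out v := by
  rw [forestDepth, SimpleGraph.ConnectedComponent.sound h.reachable]

lemma forestDepth_eq_add_one_or_of_adj (hG : G.IsAcyclic) {u v : V} (h : G.Adj u v) :
    forestDepth G u = forestDepth G v + 1 ∨ forestDepth G v = forestDepth G u + 1 := by
  rw [forestDepth_eq_dist_of_adj h]
  exact hG.dist_eq_dist_add_one_of_adj_of_reachable _ h (reachable_out_connectedComponentMk u)

lemma eq_penultimate_of_dist_eq_add_one (hG : G.IsAcyclic) {r u v : V} {P : G.Walk r u}
    (hP : P.IsPath) (huv : G.Adj u v) (hd : G.dist r u = G.dist r v + 1) :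
    v = P.penultimate := by
  obtain ⟨Q, -, hQ⟩ := (P.reachable.trans huv.reachable).exists_path_of_dist
  have hQu : (Q.concat huv.symm).IsPath :=
    SimpleGraph.Walk.isPath_of_length_eq_dist _ (by rw [Q.length_concat, hQ, hd])
  have := congrArg (fun P : G.Path r u => P.1.penultimate)
    ((hG.subsingleton_path r u).elim ⟨_, hQu⟩ ⟨P, hP⟩)
  simpa using this

lemma eq_of_forestDepth_eq_add_one (hG : G.IsAcyclic) {u v v' : V} (hv : G.Adj u v)
    (hv' : G.Adj u v') (hd : forestDepth G u = forestDepth G v + 1)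
    (hd' : forestDepth G u = forestDepth G v' + 1) : v = v' := by
  rw [forestDepth_eq_dist_of_adj hv] at hd
  rw [forestDepth_eq_dist_of_adj hv'] at hd'
  obtain ⟨P, hP, -⟩ := (reachable_out_connectedComponentMk u).exists_path_of_dist
  rw [eq_penultimate_of_dist_eq_add_one hG hP hv hd,
    eq_penultimate_of_dist_eq_add_one hG hP hv' hd']

theorem sum_neighborFinset_pow_forestDepth_le [G.LocallyFinite] (hG : G.IsAcyclic) {k : ℕ} {u : V}
    (hdeg : G.degree u ≤ k) {x : ℝ} (hx0 : 0 < x) (hx1 : x ≤ 1) :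
    ∑ v ∈ G.neighborFinset u, x ^ forestDepth G v ≤
      (x⁻¹ + (k - 1) * x) * x ^ forestDepth G u := by
  set d := forestDepth G with hd
  set parents := {v ∈ G.neighborFinset u | d u = d v + 1} with hparents
  have hcard : (#parents : ℝ) ≤ 1 := by
    refine mod_cast card_le_one.2 fun v hv v' hv' => ?_
    simp only [hparents, mem_filter, SimpleGraph.mem_neighborFinset] at hv hv'
    exact eq_of_forestDepth_eq_add_one hG hv.1 hv'.1 hv.2 hv'.2
  have hterm (v) (hv : v ∈ G.neighborFinset u) :
      x ^ d v = x * x ^ d u + if d u = d v + 1 then (x⁻¹ - x) * x ^ d u else 0 := by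
    rcases forestDepth_eq_add_one_or_of_adj hG ((G.mem_neighborFinset u v).1 hv) with h | h <;>
      rw [← hd] at h
    · rw [if_pos h, h, pow_succ]
      field_simp
      ring
    · rw [if_neg (by omega), h, pow_succ', add_zero]
  have hx_inv : x ≤ x⁻¹ := hx1.trans ((one_le_inv₀ hx0).2 hx1)
  have hdegR : (G.degree u : ℝ) ≤ k := mod_cast hdeg
  calc ∑ v ∈ G.neighborFinset u, x ^ d v
      = G.degree u * (x * x ^ d u) + #parents * ((x⁻¹ - x) * x ^ d u) := by
        rw [sum_congr rfl hterm, sum_add_distrib, ← sum_filter, sum_const, sum_const,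
          nsmul_eq_mul, nsmul_eq_mul, SimpleGraph.card_neighborFinset_eq_degree]
    _ ≤ k * (x * x ^ d u) + 1 * ((x⁻¹ - x) * x ^ d u) := by
        have := sub_nonneg.2 hx_inv
        gcongr
    _ = (x⁻¹ + (k - 1) * x) * x ^ d u := by ring

lemma inv_rpow_add_mul_rpow {m p q : ℝ} (hm : 0 < m) (hpq : p.HolderConjugate q) :
    (m ^ (-(1 / p)))⁻¹ + m * m ^ (-(1 / p)) = m ^ (1 / p) + m ^ (1 / q) := by
  have hexp : 1 + -(1 / p) = 1 / q := by rw [one_div, one_div, ← hpq.one_sub_inv, sub_eq_add_neg]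
  rw [← Real.rpow_neg hm.le, neg_neg, ← hexp, Real.rpow_add hm, Real.rpow_one]

lemma sum_neighborFinset_rpow_forestDepth_le [G.LocallyFinite] (hG : G.IsAcyclic) {k : ℕ}
    (hk : 2 ≤ k) {u : V} (hdeg : G.degree u ≤ k) {p q : ℝ} (hpq : p.HolderConjugate q) :
    ∑ v ∈ G.neighborFinset u, (((k : ℝ) - 1) ^ (-(1 / p))) ^ forestDepth G v ≤
      (((k : ℝ) - 1) ^ (1 / p) + ((k : ℝ) - 1) ^ (1 / q)) *
        (((k : ℝ) - 1) ^ (-(1 / p))) ^ forestDepth G u := by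
  have hk1 : (1 : ℝ) ≤ k - 1 := by
    have : (2 : ℝ) ≤ k := mod_cast hk
    linarith
  have hk0 : (0 : ℝ) < k - 1 := by linarith
  rw [← inv_rpow_add_mul_rpow hk0 hpq]
  exact sum_neighborFinset_pow_forestDepth_le hG hdeg (Real.rpow_pos_of_pos hk0 _)
    (Real.rpow_le_one_of_one_le_of_nonpos hk1 (neg_nonpos.2 (one_div_pos.2 hpq.pos).le))

lemma rpow_pow_rpow_sub_one {m p q : ℝ} (hm : 0 ≤ m) (hpq : p.HolderConjugate q) (n : ℕ) :
    ((m ^ (-(1 / p))) ^ n) ^ (p - 1) = (m ^ (-(1 / q))) ^ n := by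
  have hexp : -(1 / p) * (p - 1) = -(1 / q) := by
    rw [one_div, one_div, ← hpq.one_sub_inv]
    field_simp [hpq.ne_zero]
  rw [← Real.rpow_pow_comm (by positivity), ← Real.rpow_mul hm, hexp]

end Graph

theorem stmt5_general {V : Type*} {T : SimpleGraph V} (hT : T.IsAcyclic)
    (hlf : ∀ v, (T.neighborSet v).Finite) {k : ℕ} (hk : 2 ≤ k) (hdeg : ∀ v, gdeg T v ≤ k)
    {p q : ℝ} (hp : 1 < p) (hq : q = p / (p - 1)) {f : V → ℂ} (hf : memlp f p) :
    memlp (shiftOp T f) p ∧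
      lpnorm (shiftOp T f) p ≤
        (((k : ℝ) - 1) ^ (1 / p) + ((k : ℝ) - 1) ^ (1 / q)) * lpnorm f p := by
  let : T.LocallyFinite := fun v => (hlf v).fintype
  have hpq : p.HolderConjugate q := (Real.holderConjugate_iff_eq_conjExponent hp).2 hq
  have hdegree (u) : T.degree u ≤ k := gdeg_eq_degree (G := T) u ▸ hdeg u
  have hk0 : (0 : ℝ) < k - 1 := sub_pos.2 (mod_cast hk)
  refine shiftOp_bound_of_schur (w := fun v => (((k : ℝ) - 1) ^ (-(1 / p))) ^ forestDepth T v)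
    hp.le (by positivity) (fun v => by positivity)
    (fun u => sum_neighborFinset_rpow_forestDepth_le hT hk (hdegree u) hpq) (fun u => ?_) hf
  simp only [rpow_pow_rpow_sub_one hk0.le hpq]
  rw [add_comm]
  exact sum_neighborFinset_rpow_forestDepth_le hT hk (hdegree u) hpq.symm

/-- Let `T` be a tree with `deg v ≤ k` for all `v`, where `k ≥ 2`.
Let `1 < p < ∞` and `q = p/(p−1)`. Then the operator norm of the shift on `ℓ^p(T)`
satisfies `‖S‖ ≤ (k−1)^{1/p} + (k−1)^{1/q}`, i.e. `S` maps `ℓ^p(T)` to itself and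
`‖Sf‖_p ≤ ((k−1)^{1/p} + (k−1)^{1/q})‖f‖_p` for every `f ∈ ℓ^p(T)`. -/
theorem stmt5 (V : Type*) [Countable V] [Infinite V] (T : SimpleGraph V)
    (htree : T.IsTree) (hlf : ∀ v, (T.neighborSet v).Finite)
    (k : ℕ) (hk : 2 ≤ k) (hdeg : ∀ v, gdeg T v ≤ k)
    (p q : ℝ) (hp : 1 < p) (hq : q = p / (p - 1)) :
    ∀ f : V → ℂ, memlp f p →
      memlp (shiftOp T f) p ∧
      lpnorm (shiftOp T f) p ≤
        (((k : ℝ) - 1) ^ (1 / p) + ((k : ℝ) - 1) ^ (1 / q)) * lpnorm f p := by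
  intro f hf
  exact stmt5_general htree.isAcyclic hlf hk hdeg hp hq hf
end

section
/- Let T be a leafless rooted tree of bounded degree, and let M and m be the essential maximum and minimum branching numbers of T. If m > 1 and log_m(M) + 1 < p < ∞, then the kernel of the shift operator on ℓ^p(T) is nontrivial: there exists f ∈ ℓ^p(T), f ≠ 0, with Sf = 0. Moreover, for any such T (m ≥ 1) the kernel of the shift operator on ℓ^∞(T) is nontrivial. -/
/-- The children of a vertex `v` of the tree `T` rooted at `o`. -/
def children {V : Type*} (T : SimpleGraph V) (o v : V) : Set V :=
  {u | T.Adj v u ∧ T.dist o u = T.dist o v + 1}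

/-- `β(v)`: the number of children of `v`. -/
noncomputable def br {V : Type*} (T : SimpleGraph V) (o v : V) : ℕ :=
  (children T o v).ncard

/-- The set `𝓜` of vertices whose branching number is attained infinitely often. -/
def essSet {V : Type*} (T : SimpleGraph V) (o : V) : Set V :=
  {v | {w | br T o w = br T o v}.Infinite}

/-!
Put `1` at the root, `0` at odd distance from the root, and `-f(x) / β(c)` at each child of a
child `c` of a vertex `x` at even distance. At `c`, the `β(c)` equal values on the children of
`c` then cancel the value at its parent `x`, so `f` lies in the kernel; and `|f| ≤ 1`.
The grandchildren of `x` carry at most the fraction `∑ β(c) ^ (1 - p)` (over the children `c` of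
`x`) of the mass `|f(x)| ^ p`. As soon as this fraction stays below some `r < 1` far from the root,
the masses of the levels decay geometrically. For essential bounds `m` and `M` the fraction is at
most `M * m ^ (1 - p)`, which is less than `1` exactly when `logb m M + 1 < p`.
-/

open Filter Set

section General

variable {α β : Type*}

lemma finsum_mem_const_eq_ncard_nsmul {M : Type*} [AddCommMonoid M] {s : Set α} (hs : s.Finite)
    (c : M) : ∑ᶠ _i ∈ s, c = s.ncard • c := by
  rw [finsum_mem_eq_finite_toFinset_sum _ hs, Finset.sum_const, ncard_eq_toFinset_card s hs]

lemma finsum_mem_le_finsum_mem {M : Type*} [AddCommMonoid M] [PartialOrder M]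
    [IsOrderedAddMonoid M] {s : Set α} (hs : s.Finite) {f g : α → M}
    (hfg : ∀ i ∈ s, f i ≤ g i) : ∑ᶠ i ∈ s, f i ≤ ∑ᶠ i ∈ s, g i := by
  rw [finsum_mem_eq_finite_toFinset_sum _ hs, finsum_mem_eq_finite_toFinset_sum _ hs]
  exact Finset.sum_le_sum fun i hi ↦ hfg i (hs.mem_toFinset.1 hi)

lemma summable_of_summable_finsum_fiber {g : α → ℝ} (hg : 0 ≤ g) {d : α → β}
    (hd : ∀ b, {a | d a = b}.Finite) (hsum : Summable fun b ↦ ∑ᶠ a ∈ {a | d a = b}, g a) :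
    Summable g := by
  have hpart : ∀ a, ∃! b, a ∈ {a | d a = b} := fun a ↦ ⟨d a, rfl, fun _ h ↦ h.symm⟩
  refine (summable_partition hg hpart).2 ⟨fun b ↦ (hd b).summable _, hsum.congr fun b ↦ ?_⟩
  have := (hd b).to_subtype
  rw [← finsum_set_coe_eq_finsum_mem, tsum_eq_finsum (toFinite _)]

lemma eventually_cofinite_infinite_fiber {g : α → β} (hg : (range g).Finite) :
    ∀ᶠ a in cofinite, {b | g b = g a}.Infinite := by
  have hfiber : ∀ y ∈ {y ∈ range g | {b | g b = y}.Finite}, {b | g b = y}.Finite :=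
    fun _ hy ↦ hy.2
  refine ((hg.subset (sep_subset _ _)).biUnion hfiber).subset fun a ha ↦ ?_
  exact mem_biUnion (x := g a) ⟨mem_range_self a, not_infinite.1 ha⟩ rfl

lemma eventually_atTop_forall_fiber {P : α → Prop} (hP : ∀ᶠ a in cofinite, P a) (d : α → ℕ) :
    ∀ᶠ n in atTop, ∀ a, d a = n → P a := by
  have hbad : ∀ᶠ n in atTop, n ∉ d '' {a | ¬P a} := by
    rw [← Nat.cofinite_eq_atTop]
    exact (Finite.image d hP).eventually_cofinite_notMem
  filter_upwards [hbad] with n hn a ha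
  by_contra hPa
  exact hn ⟨a, hPa, ha⟩

lemma logb_natCast_natCast_nonneg (m n : ℕ) : 0 ≤ Real.logb m n :=
  div_nonneg (Real.log_natCast_nonneg n) (Real.log_natCast_nonneg m)

lemma mul_rpow_one_sub_lt_one_of_logb_add_one_lt {a b p : ℝ} (ha : 1 < a) (hb : 0 < b)
    (hp : Real.logb a b + 1 < p) : b * a ^ (1 - p) < 1 := by
  have hb_lt : b < a ^ (p - 1) := (Real.logb_lt_iff_lt_rpow ha hb).1 (by linarith)
  rw [← neg_sub p 1, Real.rpow_neg (by linarith), ← div_eq_mul_inv]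
  exact (div_lt_one (by positivity)).2 hb_lt

end General

section RootedTree

variable {V : Type*} {T : SimpleGraph V} {o : V}

lemma exists_mem_children (hT : T.Connected) {v : V} (hv : T.dist o v ≠ 0) :
    ∃ u, v ∈ children T o u := by
  obtain ⟨w, hw⟩ := hT.exists_walk_length_eq_dist v o
  cases w with
  | nil => exact absurd T.dist_self hv
  | @cons _ u _ hvu w =>
    have hu : T.dist o u ≤ w.length := T.dist_comm ▸ T.dist_le w
    have hv' : w.length + 1 = T.dist o v := T.dist_comm ▸ hw
    have hle : T.dist o v ≤ T.dist o u + 1 :=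
      (hT.dist_triangle (v := u)).trans_eq <| by rw [SimpleGraph.dist_eq_one_iff_adj.2 hvu.symm]
    exact ⟨u, hvu.symm, by omega⟩

lemma eq_of_mem_children (hT : T.IsTree) {u u' v : V} (hu : v ∈ children T o u)
    (hu' : v ∈ children T o u') : u = u' := by
  obtain ⟨p, hp⟩ := hT.connected.exists_walk_length_eq_dist o u
  obtain ⟨q, hq⟩ := hT.connected.exists_walk_length_eq_dist o u'
  have hp_path : (p.concat hu.1).IsPath :=
    SimpleGraph.Walk.isPath_of_length_eq_dist _ (by rw [SimpleGraph.Walk.length_concat, hp, hu.2])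
  have hq_path : (q.concat hu'.1).IsPath :=
    SimpleGraph.Walk.isPath_of_length_eq_dist _ (by rw [SimpleGraph.Walk.length_concat, hq, hu'.2])
  simpa only [SimpleGraph.Walk.penultimate_concat] using
    congrArg SimpleGraph.Walk.penultimate ((hT.existsUnique_path o v).unique hp_path hq_path)

lemma children_finite (hlf : ∀ v, (T.neighborSet v).Finite) (v : V) : (children T o v).Finite :=
  (hlf v).subset fun _ h ↦ h.1

lemma br_le_gdeg (hlf : ∀ v, (T.neighborSet v).Finite) (v : V) : br T o v ≤ gdeg T v :=
  ncard_le_ncard (fun _ h ↦ h.1) (hlf v)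

/-- The parent of `v` in the tree rooted at `o`: the vertex having `v` as a child. It is an
arbitrary vertex if `v` is the root. -/
noncomputable def parent (T : SimpleGraph V) (o v : V) : V :=
  @Classical.epsilon V ⟨o⟩ fun u ↦ v ∈ children T o u

lemma mem_children_parent (hT : T.Connected) {v : V} (hv : T.dist o v ≠ 0) :
    v ∈ children T o (parent T o v) :=
  Classical.epsilon_spec (exists_mem_children hT hv)

lemma parent_eq (hT : T.IsTree) {u v : V} (h : v ∈ children T o u) : parent T o v = u :=
  eq_of_mem_children hT (Classical.epsilon_spec (p := fun u ↦ v ∈ children T o u) ⟨u, h⟩) h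

lemma neighborSet_eq_insert_parent (hT : T.IsTree) {v : V} (hv : T.dist o v ≠ 0) :
    T.neighborSet v = insert (parent T o v) (children T o v) := by
  ext u
  constructor
  · intro hvu
    rcases hT.dist_eq_dist_add_one_of_adj o hvu with h | h
    · exact .inl (parent_eq hT ⟨hvu.symm, h⟩).symm
    · exact .inr ⟨hvu, h⟩
  · rintro (rfl | hu)
    · exact (mem_children_parent hT.connected hv).1.symm
    · exact hu.1

lemma parent_notMem_children (hT : T.Connected) {v : V} (hv : T.dist o v ≠ 0) :
    parent T o v ∉ children T o v := by
  intro h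
  have := (mem_children_parent hT hv).2
  have := h.2
  omega

lemma shiftOp_eq_parent_add_finsum_children (hT : T.IsTree)
    (hlf : ∀ v, (T.neighborSet v).Finite) (f : V → ℂ) {v : V} (hv : T.dist o v ≠ 0) :
    shiftOp T f v = f (parent T o v) + ∑ᶠ u ∈ children T o v, f u := by
  rw [shiftOp, neighborSet_eq_insert_parent hT hv,
    finsum_mem_insert _ (parent_notMem_children hT.connected hv) (children_finite hlf v)]

lemma eventually_cofinite_forall_children (hT : T.IsTree) {P : V → Prop}
    (hP : ∀ᶠ v in cofinite, P v) : ∀ᶠ v in cofinite, ∀ c ∈ children T o v, P c := by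
  refine (Finite.image (parent T o) hP).subset fun v hv ↦ ?_
  obtain ⟨c, hc, hPc⟩ : ∃ c ∈ children T o v, ¬P c := by simpa using hv
  exact ⟨c, hPc, parent_eq hT hc⟩

/-- The `n`-th generation of the tree rooted at `o`: the vertices at distance `n` from `o`. -/
def level (T : SimpleGraph V) (o : V) (n : ℕ) : Set V :=
  {v | T.dist o v = n}

lemma level_succ (hT : T.Connected) (n : ℕ) :
    level T o (n + 1) = ⋃ x ∈ level T o n, children T o x := by
  ext v
  simp only [mem_iUnion₂]
  constructor
  · intro hv
    have hpar := mem_children_parent hT (hv.trans_ne n.succ_ne_zero)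
    exact ⟨parent T o v, Nat.succ_injective (hpar.2.symm.trans hv), hpar⟩
  · rintro ⟨x, hx, hv⟩
    exact hv.2.trans (congrArg Nat.succ hx)

lemma level_finite (hT : T.Connected) (hlf : ∀ v, (T.neighborSet v).Finite) (n : ℕ) :
    (level T o n).Finite := by
  induction n with
  | zero => exact (finite_singleton o).subset fun v hv ↦ (hT.dist_eq_zero_iff.1 hv).symm
  | succ n ih => exact level_succ hT n ▸ ih.biUnion fun x _ ↦ children_finite hlf x

lemma finsum_level_succ (hT : T.IsTree) (hlf : ∀ v, (T.neighborSet v).Finite) {A : Type*}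
    [AddCommMonoid A] (g : V → A) (n : ℕ) :
    ∑ᶠ v ∈ level T o (n + 1), g v = ∑ᶠ x ∈ level T o n, ∑ᶠ v ∈ children T o x, g v := by
  have hdisj : (level T o n).PairwiseDisjoint (children T o) := fun x _ y _ hxy ↦
    disjoint_left.2 fun v hvx hvy ↦ hxy (eq_of_mem_children hT hvx hvy)
  rw [level_succ hT.connected,
    finsum_mem_biUnion hdisj (level_finite hT.connected hlf n) fun x _ ↦ children_finite hlf x]

lemma eventually_mem_essSet (hlf : ∀ v, (T.neighborSet v).Finite)
    (hbdd : ∃ D : ℕ, ∀ v, gdeg T v ≤ D) : ∀ᶠ v in cofinite, v ∈ essSet T o := by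
  obtain ⟨D, hD⟩ := hbdd
  exact eventually_cofinite_infinite_fiber <|
    (finite_Iic D).subset <| range_subset_iff.2 fun v ↦ (br_le_gdeg hlf v).trans (hD v)

lemma finsum_children_br_rpow_le (hlf : ∀ v, (T.neighborSet v).Finite) {M m : ℕ} {p : ℝ}
    (hm : 0 < m) (hp : 1 ≤ p) {x : V} (hx : br T o x ≤ M)
    (hc : ∀ c ∈ children T o x, m ≤ br T o c) :
    ∑ᶠ c ∈ children T o x, (br T o c : ℝ) ^ (1 - p) ≤ M * (m : ℝ) ^ (1 - p) :=
  calc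
    _ ≤ ∑ᶠ _c ∈ children T o x, (m : ℝ) ^ (1 - p) :=
      finsum_mem_le_finsum_mem (children_finite hlf x) fun c hcx ↦
        Real.rpow_le_rpow_of_nonpos (by exact_mod_cast hm) (by exact_mod_cast hc c hcx)
          (by linarith)
    _ = br T o x * (m : ℝ) ^ (1 - p) := by
      rw [finsum_mem_const_eq_ncard_nsmul (children_finite hlf x), nsmul_eq_mul, br]
    _ ≤ M * (m : ℝ) ^ (1 - p) := by gcongr

/-- Contraction of `p`-th power mass from a vertex to its grandchildren: up to finitely many
exceptions, the sums of `β(c) ^ (1 - p)` over the children `c` of a vertex at even distance from the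
root are at most a constant less than `1`. Such a sum bounds the quotient of the mass
`∑ |f| ^ p` on the grandchildren by that at the vertex, for the function `f = kernelFun T o`,
which vanishes at odd distance. -/
def GrandchildMassContracts (T : SimpleGraph V) (o : V) (p : ℝ) : Prop :=
  ∃ r < 1, ∀ᶠ x in cofinite, Even (T.dist o x) →
    ∑ᶠ c ∈ children T o x, (br T o c : ℝ) ^ (1 - p) ≤ r

lemma grandchildMassContracts_of_logb_add_one_lt (hT : T.IsTree)
    (hlf : ∀ v, (T.neighborSet v).Finite) (hbdd : ∃ D : ℕ, ∀ v, gdeg T v ≤ D) {M m : ℕ}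
    (hM : IsGreatest (br T o '' essSet T o) M) (hm : m ∈ lowerBounds (br T o '' essSet T o))
    (hm1 : 1 < m) {p : ℝ} (hp : Real.logb m M + 1 < p) :
    GrandchildMassContracts T o p := by
  have hm1' : (1 : ℝ) < m := by exact_mod_cast hm1
  have hM0 : (0 : ℝ) < M := by exact_mod_cast (zero_lt_one.trans hm1).trans_le (hm hM.1)
  have hlog := logb_natCast_natCast_nonneg m M
  refine ⟨_, mul_rpow_one_sub_lt_one_of_logb_add_one_lt hm1' hM0 hp, ?_⟩
  have hess := eventually_mem_essSet (o := o) hlf hbdd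
  filter_upwards [hess, eventually_cofinite_forall_children hT hess] with x hx hc _
  exact finsum_children_br_rpow_le hlf (by omega) (by linarith) (hM.2 (mem_image_of_mem _ hx))
    fun c hcx ↦ hm (mem_image_of_mem _ (hc c hcx))

/-- The recursion defining `kernelFun`. The first argument is the distance from the root of the
vertex at which the function is evaluated; all other values are junk. -/
noncomputable def kernelAtLevel (T : SimpleGraph V) (o : V) : ℕ → V → ℂ
  | 0, _ => 1
  | 1, _ => 0
  | n + 2, v => -kernelAtLevel T o n (parent T o (parent T o v)) / br T o (parent T o v)

/-- The function in the kernel of the shift operator with value `1` at the root `o` and `0` at odd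
distance from `o` that is constant on the children of each vertex at odd distance. -/
noncomputable def kernelFun (T : SimpleGraph V) (o v : V) : ℂ :=
  kernelAtLevel T o (T.dist o v) v

lemma kernelFun_root : kernelFun T o o = 1 := by
  rw [kernelFun, T.dist_self, kernelAtLevel]

lemma kernelAtLevel_of_odd {n : ℕ} (hn : Odd n) (v : V) : kernelAtLevel T o n v = 0 := by
  obtain ⟨k, rfl⟩ := hn
  induction k generalizing v with
  | zero => rfl
  | succ k ih =>
    rw [show 2 * (k + 1) + 1 = (2 * k + 1) + 2 by ring, kernelAtLevel, ih, neg_zero, zero_div]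

lemma kernelFun_of_odd {v : V} (hv : Odd (T.dist o v)) : kernelFun T o v = 0 :=
  kernelAtLevel_of_odd hv v

lemma kernelFun_grandchild (hT : T.IsTree) {x c w : V} (hc : c ∈ children T o x)
    (hw : w ∈ children T o c) : kernelFun T o w = -kernelFun T o x / br T o c := by
  have hdist : T.dist o w = T.dist o x + 2 := by rw [hw.2, hc.2]
  rw [kernelFun, hdist, kernelAtLevel, parent_eq hT hw, parent_eq hT hc, kernelFun]

lemma norm_kernelAtLevel_le_one (n : ℕ) (v : V) : ‖kernelAtLevel T o n v‖ ≤ 1 := by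
  induction n using Nat.twoStepInduction generalizing v with
  | zero => rw [kernelAtLevel, norm_one]
  | one => simp only [kernelAtLevel, norm_zero, zero_le_one]
  | more n ih _ =>
    rw [kernelAtLevel, norm_div, norm_neg, Complex.norm_natCast]
    exact (div_nat_le_self_of_nonnneg (norm_nonneg _) _).trans (ih _)

lemma norm_kernelFun_le_one (v : V) : ‖kernelFun T o v‖ ≤ 1 :=
  norm_kernelAtLevel_le_one _ v

lemma shiftOp_kernelFun_of_even (hT : T.IsTree) {v : V} (hv : Even (T.dist o v)) :
    shiftOp T (kernelFun T o) v = 0 := by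
  refine finsum_mem_eq_zero_of_forall_eq_zero fun u hu ↦ kernelFun_of_odd ?_
  have := hT.dist_eq_dist_add_one_of_adj o hu
  grind

lemma shiftOp_kernelFun_of_odd (hT : T.IsTree) (hlf : ∀ v, (T.neighborSet v).Finite) {v : V}
    (hv : Odd (T.dist o v)) (hchild : (children T o v).Nonempty) :
    shiftOp T (kernelFun T o) v = 0 := by
  have hpar := mem_children_parent hT.connected hv.pos.ne'
  have hbr : (br T o v : ℂ) ≠ 0 := by
    exact_mod_cast (ncard_pos (children_finite hlf v)).2 hchild |>.ne'
  calc shiftOp T (kernelFun T o) v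
      = kernelFun T o (parent T o v) +
          ∑ᶠ _w ∈ children T o v, -kernelFun T o (parent T o v) / br T o v := by
        rw [shiftOp_eq_parent_add_finsum_children hT hlf _ hv.pos.ne',
          finsum_mem_congr rfl fun w hw ↦ kernelFun_grandchild hT hpar hw]
    _ = kernelFun T o (parent T o v) + br T o v * (-kernelFun T o (parent T o v) / br T o v) := by
        rw [finsum_mem_const_eq_ncard_nsmul (children_finite hlf v), nsmul_eq_mul, ← br]
    _ = 0 := by rw [mul_div_cancel₀ _ hbr, add_neg_cancel]

lemma finsum_children_norm_kernelFun_rpow_le (hT : T.IsTree)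
    (hlf : ∀ v, (T.neighborSet v).Finite) (p : ℝ) {x c : V} (hc : c ∈ children T o x) :
    ∑ᶠ w ∈ children T o c, ‖kernelFun T o w‖ ^ p ≤
      (br T o c : ℝ) ^ (1 - p) * ‖kernelFun T o x‖ ^ p := by
  have hval : ∀ w ∈ children T o c,
      ‖kernelFun T o w‖ ^ p = (br T o c : ℝ) ^ (-p) * ‖kernelFun T o x‖ ^ p := fun w hw ↦ by
    rw [kernelFun_grandchild hT hc hw, norm_div, norm_neg, Complex.norm_natCast,
      Real.div_rpow (norm_nonneg _) (Nat.cast_nonneg _), Real.rpow_neg (Nat.cast_nonneg _),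
      div_eq_inv_mul]
  have hpow : (br T o c : ℝ) * (br T o c : ℝ) ^ (-p) ≤ (br T o c : ℝ) ^ (1 - p) := by
    simpa only [Real.rpow_one, ← sub_eq_add_neg] using
      Real.le_rpow_add (Nat.cast_nonneg (br T o c)) 1 (-p)
  rw [finsum_mem_congr rfl hval, finsum_mem_const_eq_ncard_nsmul (children_finite hlf c),
    nsmul_eq_mul, ← br, ← mul_assoc]
  gcongr

lemma finsum_level_norm_kernelFun_rpow_le (hT : T.IsTree)
    (hlf : ∀ v, (T.neighborSet v).Finite) {p r : ℝ} {n : ℕ}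
    (hr : ∀ x ∈ level T o n, ∑ᶠ c ∈ children T o x, (br T o c : ℝ) ^ (1 - p) ≤ r) :
    ∑ᶠ v ∈ level T o (n + 2), ‖kernelFun T o v‖ ^ p ≤
      r * ∑ᶠ v ∈ level T o n, ‖kernelFun T o v‖ ^ p := by
  rw [finsum_level_succ hT hlf, finsum_level_succ hT hlf, mul_finsum_mem]
  refine finsum_mem_le_finsum_mem (level_finite hT.connected hlf n) fun x hx ↦ ?_
  calc
    _ ≤ ∑ᶠ c ∈ children T o x, (br T o c : ℝ) ^ (1 - p) * ‖kernelFun T o x‖ ^ p :=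
      finsum_mem_le_finsum_mem (children_finite hlf x) fun c hc ↦
        finsum_children_norm_kernelFun_rpow_le hT hlf p hc
    _ = (∑ᶠ c ∈ children T o x, (br T o c : ℝ) ^ (1 - p)) * ‖kernelFun T o x‖ ^ p :=
      (finsum_mem_mul _ _).symm
    _ ≤ r * ‖kernelFun T o x‖ ^ p := by gcongr; exact hr x hx

lemma finsum_level_norm_kernelFun_rpow_of_odd {p : ℝ} (hp : p ≠ 0) {n : ℕ} (hn : Odd n) :
    ∑ᶠ v ∈ level T o n, ‖kernelFun T o v‖ ^ p = 0 :=
  finsum_mem_eq_zero_of_forall_eq_zero fun v hv ↦ by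
    rw [kernelFun_of_odd (hv.symm ▸ hn), norm_zero, Real.zero_rpow hp]

lemma memlp_kernelFun (hT : T.IsTree) (hlf : ∀ v, (T.neighborSet v).Finite) {p : ℝ} (hp : p ≠ 0)
    (hcontr : GrandchildMassContracts T o p) : memlp (kernelFun T o) p := by
  obtain ⟨r, hr1, hr⟩ := hcontr
  set mass : ℕ → ℝ := fun n ↦ ∑ᶠ v ∈ level T o n, ‖kernelFun T o v‖ ^ p
  have hmass_nonneg (n : ℕ) : 0 ≤ mass n :=
    finsum_nonneg fun v ↦ finsum_nonneg fun _ ↦ by positivity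
  have hdecay : ∀ᶠ k in atTop, mass (2 * (k + 1)) ≤ r * mass (2 * k) := by
    filter_upwards [(tendsto_id.const_mul_atTop' two_pos).eventually
      (eventually_atTop_forall_fiber hr (T.dist o))] with k hk
    exact finsum_level_norm_kernelFun_rpow_le hT hlf fun x hx ↦
      hk x hx (hx.symm ▸ even_two_mul k)
  have heven : Summable fun k ↦ mass (2 * k) :=
    summable_of_ratio_norm_eventually_le hr1 <| by
      simpa only [Real.norm_of_nonneg (hmass_nonneg _)] using hdecay
  have hodd : Summable fun k ↦ mass (2 * k + 1) :=
    summable_zero.congr fun k ↦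
      (finsum_level_norm_kernelFun_rpow_of_odd hp (odd_two_mul_add_one k)).symm
  exact summable_of_summable_finsum_fiber (fun v ↦ by positivity)
    (level_finite hT.connected hlf) (heven.even_add_odd hodd)

end RootedTree

theorem stmt9_general {V : Type*} {T : SimpleGraph V} (hT : T.IsTree)
    (hlf : ∀ v, (T.neighborSet v).Finite) {o : V}
    (hleafless : ∀ v, Odd (T.dist o v) → (children T o v).Nonempty) :
    ∃ f : V → ℂ, f ≠ 0 ∧ (∀ u, shiftOp T f u = 0) ∧ (∀ v, ‖f v‖ ≤ 1) ∧
      ∀ p : ℝ, 0 < p → GrandchildMassContracts T o p → memlp f p := by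
  refine ⟨kernelFun T o, fun h ↦ ?_, fun u ↦ ?_, norm_kernelFun_le_one,
    fun p hp ↦ memlp_kernelFun hT hlf hp.ne'⟩
  · exact one_ne_zero (kernelFun_root.symm.trans (congrFun h o))
  · rcases Nat.even_or_odd (T.dist o u) with hu | hu
    · exact shiftOp_kernelFun_of_even hT hu
    · exact shiftOp_kernelFun_of_odd hT hlf hu (hleafless u hu)

/-- Let `T` be a leafless rooted tree of bounded degree with essential
maximum and minimum branching numbers `M` and `m`. If `m > 1` and `log_m(M) + 1 < p < ∞`,
then the kernel of the shift on `ℓ^p(T)` is nontrivial; moreover (for any `m ≥ 1`), the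
kernel of the shift on `ℓ^∞(T)` is nontrivial. -/
theorem stmt9 (V : Type*) [Countable V] [Infinite V] (T : SimpleGraph V)
    (htree : T.IsTree) (hlf : ∀ v, (T.neighborSet v).Finite)
    (o : V) (hbdd : ∃ D : ℕ, ∀ v, gdeg T v ≤ D)
    (hleafless : ∀ v, (children T o v).Nonempty)
    (M m : ℕ)
    (hM : IsGreatest (br T o '' essSet T o) M)
    (hm : IsLeast (br T o '' essSet T o) m) :
    (∀ p : ℝ, 1 < m → Real.logb m M + 1 < p →
      ∃ f : V → ℂ, f ≠ 0 ∧ memlp f p ∧ ∀ u, shiftOp T f u = 0) ∧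
    (∃ f : V → ℂ, f ≠ 0 ∧ (∃ B : ℝ, ∀ v, ‖f v‖ ≤ B) ∧ ∀ u, shiftOp T f u = 0) := by
  obtain ⟨f, hf, hker, hbound, hlp⟩ := stmt9_general htree hlf fun v _ ↦ hleafless v
  exact ⟨fun p hm1 hp ↦ ⟨f, hf, hlp p (by linarith [logb_natCast_natCast_nonneg m M])
    (grandchildMassContracts_of_logb_add_one_lt htree hlf hbdd hM hm.2 hm1 hp), hker⟩,
    f, hf, ⟨1, hbound⟩, hker⟩
end

section
/- Let G be the infinite comb and let 1 ≤ p < ∞. The shift operator S is a bounded operator on the complex Banach space ℓ^p(G), and its spectrum is σ(S) = [−1−√2, 1−√2] ∪ [−1+√2, 1+√2]. -/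
open scoped ENNReal

/-- Base relation for the infinite comb: `Sum.inl j` is the spine vertex `v_j` and
`Sum.inr j` is the tooth vertex `w_j`; edges are `v_j ~ v_{j+1}` and `v_j ~ w_j`. -/
def icombRel : (ℕ ⊕ ℕ) → (ℕ ⊕ ℕ) → Prop
  | Sum.inl j, Sum.inl k => k = j + 1
  | Sum.inl j, Sum.inr k => j = k
  | _, _ => False

/-- The infinite comb. -/
def icomb : SimpleGraph (ℕ ⊕ ℕ) :=
  SimpleGraph.fromRel icombRel

/-!
Over the half-line the adjacency operator is `L + R`, where `R` is the forward shift and `L` its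
left inverse. With `μ = z + z⁻¹` and `‖z‖ ≤ 1` one has `μ - (L + R) = z⁻¹ (1 - z L) (1 - z R)`,
which is invertible for `‖z‖ < 1`. If `‖z‖ = 1` and the product is invertible, then `1 - z R` is a
left invertible limit of invertible elements, hence invertible. The same holds for `z⁻¹`, so
`1 - z⁻¹ L` is invertible too, and `L (1 - z R) = -z (1 - z⁻¹ L)` makes `L` invertible, which it is
not. So the spectrum of `L + R` is `[-2, 2]`, on every `ℓ^p` including `p = ∞`.

The comb is the half-line with a pendant vertex attached to every vertex. Its operator is the block
matrix `[[L + R, 1], [1, 0]]`, and elimination of the pendant vertices shows that `l` lies in its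
spectrum exactly when `l ≠ 0` and `l - l⁻¹` lies in the spectrum of `L + R`.
-/

open Set Function

theorem exists_add_inv_eq (μ : ℂ) : ∃ z : ℂ, z ≠ 0 ∧ ‖z‖ ≤ 1 ∧ z + z⁻¹ = μ := by
  obtain ⟨z, hz, hμ⟩ : ∃ z : ℂ, z ≠ 0 ∧ z + z⁻¹ = μ := by
    obtain ⟨w, hw⟩ := Complex.cos_surjective (μ / 2)
    refine ⟨Complex.exp (w * Complex.I), Complex.exp_ne_zero _, ?_⟩
    rw [← Complex.exp_neg, ← neg_mul, ← Complex.two_cos, hw, mul_div_cancel₀ _ two_ne_zero]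
  rcases le_total ‖z‖ 1 with h | h
  · exact ⟨z, hz, h, hμ⟩
  · refine ⟨z⁻¹, inv_ne_zero hz, ?_, by rw [inv_inv, add_comm, hμ]⟩
    rw [norm_inv]
    exact inv_le_one_of_one_le₀ h

theorem exists_norm_eq_one_add_inv_eq {t : ℝ} (ht : t ∈ Icc (-2) 2) :
    ∃ z : ℂ, ‖z‖ = 1 ∧ z + z⁻¹ = t := by
  refine ⟨Complex.exp (Real.arccos (t / 2) * Complex.I), Complex.norm_exp_ofReal_mul_I _, ?_⟩
  rw [← Complex.exp_neg, ← neg_mul, ← Complex.two_cos, ← Complex.ofReal_cos,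
    Real.cos_arccos (by linarith [ht.1]) (by linarith [ht.2])]
  push_cast
  ring

theorem add_inv_mem_Icc_of_norm_eq_one {z : ℂ} (hz : ‖z‖ = 1) :
    z + z⁻¹ ∈ Complex.ofReal '' Icc (-2) 2 := by
  have hre : |z.re| ≤ 1 := hz ▸ Complex.abs_re_le_norm z
  refine ⟨2 * z.re, ⟨by linarith [neg_abs_le z.re], by linarith [le_abs_self z.re]⟩, ?_⟩
  rw [Complex.inv_eq_conj hz, Complex.add_conj]

section LeftInverse

variable {A : Type*}

theorem algebraMap_add_inv_sub_add [Ring A] [Algebra ℂ A] {L R : A} {z : ℂ}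
    (hLR : L * R = 1) (hz : z ≠ 0) :
    algebraMap ℂ A (z + z⁻¹) - (L + R) = z⁻¹ • ((1 - z • L) * (1 - z • R)) := by
  have hprod : (1 - z • L) * (1 - z • R) = 1 - z • L - z • R + (z * z) • (L * R) := by
    rw [mul_sub, mul_one, sub_mul, one_mul, smul_mul_smul_comm]
    abel
  rw [hprod, hLR, Algebra.algebraMap_eq_smul_one]
  match_scalars <;> field_simp
  ring

theorem isUnit_algebraMap_add_inv_sub_add_iff [Ring A] [Algebra ℂ A] {L R : A} {z : ℂ}
    (hLR : L * R = 1) (hz : z ≠ 0) :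
    IsUnit (algebraMap ℂ A (z + z⁻¹) - (L + R)) ↔
      IsUnit ((1 - z • L) * (1 - z • R)) := by
  rw [algebraMap_add_inv_sub_add hLR hz]
  exact isUnit_smul_iff (Units.mk0 z⁻¹ (inv_ne_zero hz)) _

variable [NormedRing A] [CompleteSpace A]

theorem isUnit_of_isUnit_mul_of_mem_closure {a b : A} (hba : IsUnit (b * a))
    (ha : a ∈ closure {x : A | IsUnit x}) : IsUnit a := by
  have hopen : IsOpen {x : A | IsUnit (b * x)} := Units.isOpen.preimage (continuous_const_mul b)
  obtain ⟨x, hbx, hx⟩ := mem_closure_iff.mp ha _ hopen hba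
  have hb : IsUnit b := hx.mul_right_iff.mp hbx
  exact hb.mul_left_iff.mp hba

variable [NormedAlgebra ℂ A] {a L R : A} {z : ℂ}

theorem isUnit_one_sub_smul_of_norm_lt_one (ha : ‖a‖ ≤ 1) (hz : ‖z‖ < 1) :
    IsUnit (1 - z • a) := by
  refine isUnit_one_sub_of_norm_lt_one ?_
  calc ‖z • a‖ ≤ ‖z‖ * ‖a‖ := norm_smul_le z a
    _ ≤ ‖z‖ * 1 := by gcongr
    _ < 1 := by rwa [mul_one]

theorem one_sub_smul_mem_closure_isUnit (ha : ‖a‖ ≤ 1) (hz : ‖z‖ ≤ 1) :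
    1 - z • a ∈ closure {x : A | IsUnit x} := by
  have hz : z ∈ closure (Metric.ball (0 : ℂ) 1) := by
    rwa [closure_ball 0 one_ne_zero, mem_closedBall_zero_iff]
  have hcont : Continuous fun w : ℂ => 1 - w • a := by fun_prop
  refine map_mem_closure (f := fun w : ℂ => 1 - w • a) hcont hz fun w hw => ?_
  exact isUnit_one_sub_smul_of_norm_lt_one ha (mem_ball_zero_iff.mp hw)

theorem isUnit_one_sub_smul_of_isUnit_mul (hR : ‖R‖ ≤ 1) (hz : ‖z‖ ≤ 1)
    (h : IsUnit ((1 - z • L) * (1 - z • R))) : IsUnit (1 - z • L) ∧ IsUnit (1 - z • R) := by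
  have hzR := isUnit_of_isUnit_mul_of_mem_closure h (one_sub_smul_mem_closure_isUnit hR hz)
  exact ⟨hzR.mul_right_iff.mp h, hzR⟩

theorem not_isUnit_algebraMap_add_inv_sub_add (hLR : L * R = 1) (hRL : R * L ≠ 1)
    (hR : ‖R‖ ≤ 1) (hz : ‖z‖ = 1) : ¬ IsUnit (algebraMap ℂ A (z + z⁻¹) - (L + R)) := by
  intro hunit
  have hz0 : z ≠ 0 := norm_ne_zero_iff.mp (hz ▸ one_ne_zero)
  obtain ⟨-, hzR⟩ := isUnit_one_sub_smul_of_isUnit_mul hR hz.le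
    ((isUnit_algebraMap_add_inv_sub_add_iff hLR hz0).mp hunit)
  obtain ⟨hzL, -⟩ : IsUnit (1 - z⁻¹ • L) ∧ IsUnit (1 - z⁻¹ • R) := by
    refine isUnit_one_sub_smul_of_isUnit_mul hR (by rw [norm_inv, hz, inv_one]) ?_
    rwa [← isUnit_algebraMap_add_inv_sub_add_iff hLR (inv_ne_zero hz0), inv_inv, add_comm z⁻¹]
  have hmul : L * (1 - z • R) = (-z) • (1 - z⁻¹ • L) := by
    rw [mul_sub, mul_smul_comm, hLR, mul_one, smul_sub, smul_smul, neg_mul, mul_inv_cancel₀ hz0]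
    module
  have hL : IsUnit L := by
    rw [← hzR.mul_right_iff, hmul]
    exact hzL.smul (Units.mk0 (-z) (neg_ne_zero.mpr hz0))
  exact hRL (hL.mul_left_cancel (by rw [← mul_assoc, hLR, one_mul, mul_one]))

theorem spectrum_add_eq_of_mul_eq_one (hLR : L * R = 1) (hRL : R * L ≠ 1)
    (hL : ‖L‖ ≤ 1) (hR : ‖R‖ ≤ 1) :
    spectrum ℂ (L + R) = Complex.ofReal '' Icc (-2) 2 := by
  apply Subset.antisymm
  · intro μ hμ
    obtain ⟨z, hz0, hz, rfl⟩ := exists_add_inv_eq μ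
    rcases hz.lt_or_eq with hz | hz
    · refine absurd ?_ (spectrum.mem_iff.mp hμ)
      rw [isUnit_algebraMap_add_inv_sub_add_iff hLR hz0]
      exact (isUnit_one_sub_smul_of_norm_lt_one hL hz).mul
        (isUnit_one_sub_smul_of_norm_lt_one hR hz)
    · exact add_inv_mem_Icc_of_norm_eq_one hz
  · rintro _ ⟨t, ht, rfl⟩
    obtain ⟨z, hz, hzt⟩ := exists_norm_eq_one_add_inv_eq ht
    rw [← hzt, spectrum.mem_iff]
    exact not_isUnit_algebraMap_add_inv_sub_add hLR hRL hR hz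

end LeftInverse

section Pendant

variable {𝕜 E : Type*} [NontriviallyNormedField 𝕜] [NormedAddCommGroup E] [NormedSpace 𝕜 E]

/-- The adjacency operator of the graph obtained by attaching one pendant vertex to every vertex of
a graph with adjacency operator `T`. A function on the enlarged graph is encoded as a pair: its
values at the old vertices, then its values at the pendant vertices. -/
def pendantShift (T : E →L[𝕜] E) : E × E →L[𝕜] E × E :=
  (T.coprod (.id 𝕜 E)).prod (.fst 𝕜 E E)

theorem isUnit_pendantShift (T : E →L[𝕜] E) : IsUnit (pendantShift T) := by
  refine isUnit_iff_exists.mpr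
    ⟨(ContinuousLinearMap.snd 𝕜 E E).prod (.fst 𝕜 E E - T ∘L .snd 𝕜 E E), ?_, ?_⟩ <;>
  ext f <;> simp [pendantShift]

theorem isUnit_algebraMap_sub_pendantShift_iff [CompleteSpace E] (T : E →L[𝕜] E) {l : 𝕜}
    (hl : l ≠ 0) :
    IsUnit (algebraMap 𝕜 _ l - pendantShift T) ↔ IsUnit (algebraMap 𝕜 _ (l - l⁻¹) - T) := by
  -- `l - pendantShift T` is block diagonal up to invertible row and column operations `e₁`, `e₂`.
  let e₁ : E × E ≃ E × E :=
    { toFun x := (x.1 - l⁻¹ • x.2, x.2)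
      invFun x := (x.1 + l⁻¹ • x.2, x.2)
      left_inv _ := by simp
      right_inv _ := by simp }
  let e₂ : E × E ≃ E × E :=
    { toFun x := (x.1, l • x.2 - x.1)
      invFun x := (x.1, l⁻¹ • (x.1 + x.2))
      left_inv _ := by simp [hl]
      right_inv _ := by simp [hl] }
  have hfactor : ⇑(algebraMap 𝕜 (E × E →L[𝕜] E × E) l - pendantShift T) =
      e₁ ∘ Prod.map (algebraMap 𝕜 (E →L[𝕜] E) (l - l⁻¹) - T) id ∘ e₂ := by
    funext x
    ext
    · change l • x.1 - (T x.1 + x.2) = (l - l⁻¹) • x.1 - T x.1 - l⁻¹ • (l • x.2 - x.1)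
      rw [smul_sub, inv_smul_smul₀ hl, sub_smul]
      abel
    · simp [e₁, e₂, pendantShift, Algebra.algebraMap_eq_smul_one]
  rw [ContinuousLinearMap.isUnit_iff_bijective, ContinuousLinearMap.isUnit_iff_bijective, hfactor,
    e₁.comp_bijective, e₂.bijective_comp, Prod.map_bijective]
  exact and_iff_left bijective_id

theorem spectrum_pendantShift [CompleteSpace E] (T : E →L[𝕜] E) :
    spectrum 𝕜 (pendantShift T) = {l | l ≠ 0 ∧ l - l⁻¹ ∈ spectrum 𝕜 T} := by
  ext l
  rcases eq_or_ne l 0 with rfl | hl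
  · simp only [mem_ofPred_eq, ne_eq, not_true_eq_false, false_and, iff_false]
    exact spectrum.zero_notMem 𝕜 (isUnit_pendantShift T)
  · rw [mem_ofPred_eq, and_iff_right hl, spectrum.mem_iff, spectrum.mem_iff,
      isUnit_algebraMap_sub_pendantShift_iff T hl]

end Pendant

section LpEmbedding

variable {𝕜 F α β : Type*} [NormedAddCommGroup F]
  {p : ℝ≥0∞} (σ : α ↪ β)

theorem norm_extend_zero_rpow {r : ℝ} (hr : r ≠ 0) (f : α → F) :
    (fun b => ‖extend σ f 0 b‖ ^ r) = extend σ (fun a => ‖f a‖ ^ r) 0 := by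
  funext b
  rw [apply_extend (fun x : F => ‖x‖ ^ r)]
  congr 1
  funext c
  simp [Real.zero_rpow hr]

theorem norm_extend_zero_apply_le {f : α → F} {C : ℝ} (hC : 0 ≤ C) (hf : ∀ a, ‖f a‖ ≤ C) (b : β) :
    ‖extend σ f 0 b‖ ≤ C := by
  by_cases hb : ∃ a, σ a = b
  · obtain ⟨a, rfl⟩ := hb
    rw [σ.injective.extend_apply]
    exact hf a
  · rw [extend_apply' _ _ _ hb, Pi.zero_apply, norm_zero]
    exact hC

theorem memℓp_comp_embedding {f : β → F} (hf : Memℓp f p) : Memℓp (f ∘ σ) p := by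
  rcases p.trichotomy with rfl | rfl | hp0
  · exact memℓp_zero (hf.finite_dsupport.preimage σ.injective.injOn)
  · exact memℓp_infty (hf.bddAbove.mono (range_comp_subset_range σ fun b => ‖f b‖))
  · exact memℓp_gen ((hf.summable hp0).comp_injective σ.injective)

theorem memℓp_extend_zero {f : α → F} (hf : Memℓp f p) : Memℓp (extend σ f 0) p := by
  rcases p.trichotomy with rfl | rfl | hp0
  · refine memℓp_zero ((hf.finite_dsupport.image σ).subset fun b hb => ?_)
    obtain ⟨a, rfl⟩ : ∃ a, σ a = b := of_not_not fun hnot => hb (extend_apply' _ _ _ hnot)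
    rw [mem_ofPred_eq, σ.injective.extend_apply] at hb
    exact mem_image_of_mem σ hb
  · obtain ⟨C, hC⟩ := hf.bddAbove
    refine memℓp_infty ⟨max C 0, forall_mem_range.mpr ?_⟩
    exact norm_extend_zero_apply_le σ (le_max_right C 0) fun a =>
      (hC (mem_range_self a)).trans (le_max_left C 0)
  · refine memℓp_gen ?_
    rw [norm_extend_zero_rpow σ hp0.ne', summable_extend_zero σ.injective]
    exact hf.summable hp0

variable [Fact (1 ≤ p)]

theorem norm_comp_embedding_le (f : lp (fun _ : β => F) p) :
    ‖(⟨f ∘ σ, memℓp_comp_embedding σ (lp.memℓp f)⟩ : lp (fun _ : α => F) p)‖ ≤ ‖f‖ := by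
  rcases p.dichotomy with rfl | hp
  · exact lp.norm_le_of_forall_le (norm_nonneg f) fun a =>
      lp.norm_apply_le_norm ENNReal.top_ne_zero f (σ a)
  · have hp0 : 0 < p.toReal := one_pos.trans_le hp
    refine lp.norm_le_of_tsum_le hp0 (norm_nonneg f) ?_
    rw [lp.norm_rpow_eq_tsum hp0]
    exact tsum_comp_le_tsum_of_inj ((lp.memℓp f).summable hp0) (fun b => by positivity) σ.injective

theorem norm_extend_zero_le (f : lp (fun _ : α => F) p) :
    ‖(⟨extend σ f 0, memℓp_extend_zero σ (lp.memℓp f)⟩ : lp (fun _ : β => F) p)‖ ≤ ‖f‖ := by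
  rcases p.dichotomy with rfl | hp
  · exact lp.norm_le_of_forall_le (norm_nonneg f) <|
      norm_extend_zero_apply_le σ (norm_nonneg f) (lp.norm_apply_le_norm ENNReal.top_ne_zero f)
  · have hp0 : 0 < p.toReal := one_pos.trans_le hp
    refine lp.norm_le_of_tsum_le hp0 (norm_nonneg f) ?_
    change ∑' b, ‖extend σ f 0 b‖ ^ p.toReal ≤ _
    rw [norm_extend_zero_rpow σ hp0.ne', tsum_extend_zero σ.injective,
      lp.norm_rpow_eq_tsum hp0]

variable [NontriviallyNormedField 𝕜] [NormedSpace 𝕜 F]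

variable (𝕜 F p) in
/-- The restriction operator `f ↦ f ∘ σ` from `ℓ^p(β)` to `ℓ^p(α)` along an embedding `σ`. -/
noncomputable def lpPullback : lp (fun _ : β => F) p →L[𝕜] lp (fun _ : α => F) p :=
  LinearMap.mkContinuous
    { toFun f := ⟨f ∘ σ, memℓp_comp_embedding σ (lp.memℓp f)⟩
      map_add' _ _ := rfl
      map_smul' _ _ := rfl } 1 fun f =>
    (norm_comp_embedding_le σ f).trans_eq (one_mul _).symm

variable (𝕜 F p) in
/-- The operator from `ℓ^p(α)` to `ℓ^p(β)` that moves a function along an embedding `σ` and extends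
it by zero off the range of `σ`. -/
noncomputable def lpExtend : lp (fun _ : α => F) p →L[𝕜] lp (fun _ : β => F) p :=
  LinearMap.mkContinuous
    { toFun f := ⟨extend σ f 0, memℓp_extend_zero σ (lp.memℓp f)⟩
      map_add' f g := lp.ext (by simpa using! extend_add σ (f : α → F) g 0 0)
      map_smul' c f := lp.ext (by simpa using! extend_smul c σ (f : α → F) 0) } 1 fun f =>
    (norm_extend_zero_le σ f).trans_eq (one_mul _).symm

@[simp]
theorem lpPullback_apply (f : lp (fun _ : β => F) p) (a : α) :
    lpPullback 𝕜 F p σ f a = f (σ a) :=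
  rfl

@[simp]
theorem lpExtend_apply_embedding (f : lp (fun _ : α => F) p) (a : α) :
    lpExtend 𝕜 F p σ f (σ a) = f a :=
  σ.injective.extend_apply (⇑f) 0 a

theorem lpExtend_apply_of_notMem_range (f : lp (fun _ : α => F) p) {b : β} (hb : b ∉ range σ) :
    lpExtend 𝕜 F p σ f b = 0 :=
  extend_apply' (⇑f) (0 : β → F) b hb

theorem norm_lpPullback_le : ‖lpPullback 𝕜 F p σ‖ ≤ 1 :=
  LinearMap.mkContinuous_norm_le _ zero_le_one _

theorem norm_lpExtend_le : ‖lpExtend 𝕜 F p σ‖ ≤ 1 :=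
  LinearMap.mkContinuous_norm_le _ zero_le_one _

theorem lpPullback_mul_lpExtend (σ : α ↪ α) : lpPullback 𝕜 F p σ * lpExtend 𝕜 F p σ = 1 := by
  ext f a
  rw [mul_apply_eq_comp, lpPullback_apply, lpExtend_apply_embedding, one_apply_eq_self]

theorem lpExtend_mul_lpPullback_ne_one [Nontrivial F] {σ : α ↪ α} (hσ : ¬ Surjective σ) :
    lpExtend 𝕜 F p σ * lpPullback 𝕜 F p σ ≠ 1 := by
  classical
  obtain ⟨b, hb⟩ := not_forall.mp hσ
  obtain ⟨v, hv⟩ := exists_ne (0 : F)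
  intro h
  have hval : lpExtend 𝕜 F p σ (lpPullback 𝕜 F p σ (lp.single p b v)) b = v := by
    rw [← mul_apply_eq_comp, h, one_apply_eq_self, lp.single_apply_self]
  exact hv (hval.symm.trans (lpExtend_apply_of_notMem_range σ _ hb))

@[simp]
theorem lpExtend_inl_apply_inl (f : lp (fun _ : α => F) p) (a : α) :
    lpExtend 𝕜 F p (.inl : α ↪ α ⊕ β) f (.inl a) = f a :=
  lpExtend_apply_embedding .inl f a

@[simp]
theorem lpExtend_inr_apply_inr (f : lp (fun _ : β => F) p) (b : β) :
    lpExtend 𝕜 F p (.inr : β ↪ α ⊕ β) f (.inr b) = f b :=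
  lpExtend_apply_embedding .inr f b

@[simp]
theorem lpExtend_inl_apply_inr (f : lp (fun _ : α => F) p) (b : β) :
    lpExtend 𝕜 F p (.inl : α ↪ α ⊕ β) f (.inr b) = 0 :=
  lpExtend_apply_of_notMem_range _ f (by simp)

@[simp]
theorem lpExtend_inr_apply_inl (f : lp (fun _ : β => F) p) (a : α) :
    lpExtend 𝕜 F p (.inr : β ↪ α ⊕ β) f (.inl a) = 0 :=
  lpExtend_apply_of_notMem_range _ f (by simp)

variable (𝕜 F α β p) in
/-- The isomorphism `ℓ^p(α ⊕ β) ≃ ℓ^p(α) × ℓ^p(β)` given by restriction to the two summands. It is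
not isometric, since the product carries the maximum norm. -/
noncomputable def lpSumEquiv :
    lp (fun _ : α ⊕ β => F) p ≃L[𝕜] lp (fun _ : α => F) p × lp (fun _ : β => F) p :=
  .equivOfInverse ((lpPullback 𝕜 F p .inl).prod (lpPullback 𝕜 F p .inr))
    ((lpExtend 𝕜 F p .inl).coprod (lpExtend 𝕜 F p .inr))
    (fun f => by ext (a | b) <;> simp)
    (fun f => by ext <;> simp)

end LpEmbedding

theorem spectrum_lpPullback_add_lpExtend {F α : Type*} [NormedAddCommGroup F] [NormedSpace ℂ F]
    [CompleteSpace F] [Nontrivial F] {p : ℝ≥0∞} [Fact (1 ≤ p)] {σ : α ↪ α} (hσ : ¬ Surjective σ) :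
    spectrum ℂ (lpPullback ℂ F p σ + lpExtend ℂ F p σ) = Complex.ofReal '' Icc (-2) 2 :=
  spectrum_add_eq_of_mul_eq_one (lpPullback_mul_lpExtend σ) (lpExtend_mul_lpPullback_ne_one hσ)
    (norm_lpPullback_le σ) (norm_lpExtend_le σ)

theorem strictMonoOn_sub_inv_Ioi : StrictMonoOn (fun x : ℝ => x - x⁻¹) (Ioi 0) :=
  fun _ hx _ _ hxy => sub_lt_sub hxy (inv_strictAnti₀ hx hxy)

theorem sub_inv_mem_Icc_iff_of_pos {x : ℝ} (hx : 0 < x) :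
    x - x⁻¹ ∈ Icc (-2) 2 ↔ x ∈ Icc (-1 + √2) (1 + √2) := by
  have hsq : √2 * √2 = 2 := Real.mul_self_sqrt zero_le_two
  have hpos : 0 < -1 + √2 := by linarith [Real.one_lt_sqrt_two]
  have hinv : (-1 + √2)⁻¹ = 1 + √2 := inv_eq_of_mul_eq_one_right (by linear_combination hsq)
  have hlower : (-1 + √2) - (-1 + √2)⁻¹ = -2 := by rw [hinv]; ring
  have hupper : (1 + √2) - (1 + √2)⁻¹ = 2 := by rw [← hinv, inv_inv, hinv]; ring
  have hle : -2 ≤ x - x⁻¹ ↔ -1 + √2 ≤ x :=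
    by simpa only [hlower] using strictMonoOn_sub_inv_Ioi.le_iff_le hpos hx
  have hge : x - x⁻¹ ≤ 2 ↔ x ≤ 1 + √2 :=
    by simpa only [hupper] using
      strictMonoOn_sub_inv_Ioi.le_iff_le hx (by positivity : 0 < 1 + √2)
  exact and_congr hle hge

theorem ne_zero_and_sub_inv_mem_Icc_iff {x : ℝ} :
    x ≠ 0 ∧ x - x⁻¹ ∈ Icc (-2) 2 ↔
      x ∈ Icc (-1 - √2) (1 - √2) ∪ Icc (-1 + √2) (1 + √2) := by
  have hone : 1 < √2 := Real.one_lt_sqrt_two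
  rcases lt_trichotomy x 0 with hx | rfl | hx
  · have hneg : x - x⁻¹ ∈ Icc (-2) 2 ↔ x ∈ Icc (-1 - √2) (1 - √2) := by
      have h := sub_inv_mem_Icc_iff_of_pos (neg_pos.mpr hx)
      rw [inv_neg, neg_sub_neg, mem_Icc, mem_Icc] at h
      rw [mem_Icc, mem_Icc]
      grind
    have hnot : x ∉ Icc (-1 + √2) (1 + √2) := fun h => by linarith [h.1]
    rw [hneg, mem_union, and_iff_right hx.ne, or_iff_left hnot]
  · simp only [ne_eq, not_true_eq_false, false_and, false_iff, mem_union, mem_Icc]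
    grind
  · have hnot : x ∉ Icc (-1 - √2) (1 - √2) := fun h => by linarith [h.2]
    rw [sub_inv_mem_Icc_iff_of_pos hx, mem_union, and_iff_right hx.ne', or_iff_right hnot]

theorem im_eq_zero_of_im_sub_inv_eq_zero {l : ℂ} (h : (l - l⁻¹).im = 0) : l.im = 0 := by
  have hfactor : l.im * (1 + (Complex.normSq l)⁻¹) = 0 := by
    rw [← h, Complex.sub_im, Complex.inv_im]
    ring
  have hpos : 0 < 1 + (Complex.normSq l)⁻¹ := by
    have := Complex.normSq_nonneg l
    positivity
  exact (mul_eq_zero.mp hfactor).resolve_right hpos.ne'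

theorem setOf_sub_inv_mem_Icc_eq :
    {l : ℂ | l ≠ 0 ∧ l - l⁻¹ ∈ Complex.ofReal '' Icc (-2) 2} =
      Complex.ofReal '' (Icc (-1 - √2) (1 - √2) ∪ Icc (-1 + √2) (1 + √2)) := by
  ext l
  constructor
  · rintro ⟨hl, t, ht, htl⟩
    have him : l.im = 0 := im_eq_zero_of_im_sub_inv_eq_zero (htl ▸ Complex.ofReal_im t)
    lift l to ℝ using him
    have hlt : t = l - l⁻¹ := mod_cast htl
    exact ⟨l, ne_zero_and_sub_inv_mem_Icc_iff.mp ⟨mod_cast hl, hlt ▸ ht⟩, rfl⟩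
  · rintro ⟨x, hx, rfl⟩
    obtain ⟨hx0, hmem⟩ := ne_zero_and_sub_inv_mem_Icc_iff.mpr hx
    exact ⟨mod_cast hx0, x - x⁻¹, hmem, by push_cast; rfl⟩

section Comb

theorem shiftOp_eq_sum {V : Type*} {G : SimpleGraph V} {u : V} {s : Finset V}
    (hs : ∀ v, G.Adj u v ↔ v ∈ s) (f : V → ℂ) : shiftOp G f u = ∑ v ∈ s, f v := by
  have hset : G.neighborSet u = s := Set.ext hs
  rw [shiftOp, hset, finsum_mem_coe_finset]

theorem shiftOp_icomb_inl_zero (f : ℕ ⊕ ℕ → ℂ) :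
    shiftOp icomb f (.inl 0) = f (.inl 1) + f (.inr 0) := by
  have hadj : ∀ v, icomb.Adj (.inl 0) v ↔ v ∈ ({.inl 1, .inr 0} : Finset (ℕ ⊕ ℕ)) := by
    rintro (k | k) <;> grind [icomb, icombRel, SimpleGraph.fromRel_adj]
  rw [shiftOp_eq_sum hadj, Finset.sum_pair (by simp)]

theorem shiftOp_icomb_inl_succ (f : ℕ ⊕ ℕ → ℂ) (j : ℕ) :
    shiftOp icomb f (.inl (j + 1)) = f (.inl (j + 2)) + f (.inl j) + f (.inr (j + 1)) := by
  have hadj : ∀ v, icomb.Adj (.inl (j + 1)) v ↔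
      v ∈ ({.inl (j + 2), .inl j, .inr (j + 1)} : Finset (ℕ ⊕ ℕ)) := by
    rintro (k | k) <;> grind [icomb, icombRel, SimpleGraph.fromRel_adj]
  rw [shiftOp_eq_sum hadj, Finset.sum_insert (by simp), Finset.sum_pair (by simp), add_assoc]

theorem shiftOp_icomb_inr (f : ℕ ⊕ ℕ → ℂ) (j : ℕ) :
    shiftOp icomb f (.inr j) = f (.inl j) := by
  have hadj : ∀ v, icomb.Adj (.inr j) v ↔ v ∈ ({.inl j} : Finset (ℕ ⊕ ℕ)) := by
    rintro (k | k) <;> simp [icomb, icombRel]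
  rw [shiftOp_eq_sum hadj, Finset.sum_singleton]

variable (p : ℝ≥0∞) [Fact (1 ≤ p)]

/-- The adjacency operator of the half-line `0 ~ 1 ~ 2 ~ ⋯` on `ℓ^p(ℕ)`: backward shift plus forward
shift. -/
noncomputable def halfLineShift : lp (fun _ : ℕ => ℂ) p →L[ℂ] lp (fun _ : ℕ => ℂ) p :=
  lpPullback ℂ ℂ p (addRightEmbedding 1) + lpExtend ℂ ℂ p (addRightEmbedding 1)

/-- The adjacency operator of the infinite comb on `ℓ^p`, built from the half-line by attaching
pendant vertices: the spine is the first summand of `ℕ ⊕ ℕ`, the teeth are the second. -/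
noncomputable def combShift : lp (fun _ : ℕ ⊕ ℕ => ℂ) p →L[ℂ] lp (fun _ : ℕ ⊕ ℕ => ℂ) p :=
  (lpSumEquiv ℂ ℂ ℕ ℕ p).symm.conjContinuousAlgEquiv (pendantShift (halfLineShift p))

variable {p}

theorem halfLineShift_apply_zero (f : lp (fun _ : ℕ => ℂ) p) : halfLineShift p f 0 = f 1 := by
  have h0 : lpExtend ℂ ℂ p (addRightEmbedding 1) f 0 = 0 :=
    lpExtend_apply_of_notMem_range _ f (by simp)
  simp [halfLineShift, h0]

theorem halfLineShift_apply_succ (f : lp (fun _ : ℕ => ℂ) p) (j : ℕ) :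
    halfLineShift p f (j + 1) = f (j + 2) + f j := by
  have hsucc : lpExtend ℂ ℂ p (addRightEmbedding 1) f (j + 1) = f j :=
    lpExtend_apply_embedding (addRightEmbedding 1) f j
  simp [halfLineShift, hsucc]

theorem combShift_apply_inl (f : lp (fun _ : ℕ ⊕ ℕ => ℂ) p) (j : ℕ) :
    combShift p f (.inl j) = halfLineShift p (lpPullback ℂ ℂ p .inl f) j + f (.inr j) := by
  simp [combShift, lpSumEquiv, pendantShift]

theorem combShift_apply_inr (f : lp (fun _ : ℕ ⊕ ℕ => ℂ) p) (j : ℕ) :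
    combShift p f (.inr j) = f (.inl j) := by
  simp [combShift, lpSumEquiv, pendantShift]

theorem combShift_apply (f : lp (fun _ : ℕ ⊕ ℕ => ℂ) p) (x : ℕ ⊕ ℕ) :
    combShift p f x = shiftOp icomb (fun y => f y) x := by
  rcases x with (_ | j) | j
  · rw [combShift_apply_inl, halfLineShift_apply_zero, shiftOp_icomb_inl_zero]
    rfl
  · rw [combShift_apply_inl, halfLineShift_apply_succ, shiftOp_icomb_inl_succ]
    rfl
  · rw [combShift_apply_inr, shiftOp_icomb_inr]

theorem spectrum_halfLineShift :
    spectrum ℂ (halfLineShift p) = Complex.ofReal '' Icc (-2) 2 := by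
  refine spectrum_lpPullback_add_lpExtend fun hsurj => ?_
  obtain ⟨j, hj⟩ := hsurj 0
  exact j.succ_ne_zero hj

theorem spectrum_combShift :
    spectrum ℂ (combShift p) =
      Complex.ofReal '' (Icc (-1 - √2) (1 - √2) ∪ Icc (-1 + √2) (1 + √2)) := by
  rw [combShift, AlgEquiv.spectrum_eq, spectrum_pendantShift, spectrum_halfLineShift,
    setOf_sub_inv_mem_Icc_eq]

end Comb

theorem stmt18_general (p : ℝ≥0∞) [Fact (1 ≤ p)] :
    ∃ S : lp (fun _ : ℕ ⊕ ℕ => ℂ) p →L[ℂ] lp (fun _ : ℕ ⊕ ℕ => ℂ) p,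
      (∀ (f : lp (fun _ : ℕ ⊕ ℕ => ℂ) p) (x : ℕ ⊕ ℕ),
        (S f) x = shiftOp icomb (fun y => f y) x) ∧
      spectrum ℂ S = (fun t : ℝ => (t : ℂ)) ''
        (Set.Icc (-1 - Real.sqrt 2) (1 - Real.sqrt 2) ∪
          Set.Icc (-1 + Real.sqrt 2) (1 + Real.sqrt 2)) :=
  ⟨combShift p, combShift_apply, spectrum_combShift⟩

/-- For `1 ≤ p < ∞`, the shift is a bounded operator on
`ℓ^p` of the infinite comb, and its spectrum is
`[−1−√2, 1−√2] ∪ [−1+√2, 1+√2]`. -/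
theorem stmt18 (p : ℝ≥0∞) [Fact (1 ≤ p)] (hp : p ≠ ⊤) :
    ∃ S : lp (fun _ : ℕ ⊕ ℕ => ℂ) p →L[ℂ] lp (fun _ : ℕ ⊕ ℕ => ℂ) p,
      (∀ (f : lp (fun _ : ℕ ⊕ ℕ => ℂ) p) (x : ℕ ⊕ ℕ),
        (S f) x = shiftOp icomb (fun y => f y) x) ∧
      spectrum ℂ S = (fun t : ℝ => (t : ℂ)) ''
        (Set.Icc (-1 - Real.sqrt 2) (1 - Real.sqrt 2) ∪
          Set.Icc (-1 + Real.sqrt 2) (1 + Real.sqrt 2)) :=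
  stmt18_general p
end
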